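/- Let h be a monoid homomorphism from SKω to a monoid M, and suppose that for all k, l ∈ ℕ with k ≠ l we have h(c^k) ≠ h(c^l), where c is the circle element of SKω. Then h is injective, so SKω is isomorphic to the submonoid h(SKω) of M. -/

import Mathlib

/-!
The elements of `SKω` are Brauer diagrams: `n` points at the top and `m` points at the bottom are
joined in pairs, everything further right is parallel strands, and circles are counted. Multiplying
by `bend m = γ_m ⋯ γ_1` bends the bottom points up to the top. By `HasType.bend_cancel` this loses
no information, and by `exists_bendsAt` every element becomes a product of a power of the circle
and a `Matching`: a diagram of `p` caps and no circles on `2 * p` points. So it suffices that a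
homomorphism separating the powers of the circle `c` separates all elements `c ^ k * u` with `u` a
matching.

A matching is given recursively by the partner `j + 1` of its first point and a matching on the
remaining points. Closing the points `0` and `j + 1` by `longCup j` produces a circle if they are
joined (`longCup_longCap`), and otherwise only a smaller matching (`Matching.longCup_mul_of_ne`).
Comparing circle counts, two matchings of equal size whose first points have different partners
would force both `k + 1 = l` and `l + 1 = k`, which gives `Matching.eq_of_hom_eq` by induction.

If the sizes differ, closing all points of the smaller matching identifies a power of `c` with a
nonempty matching times a power of `c`. As `c` is central whereas a nonempty matching shifts the
diagrams to its right, this makes some crossing act trivially, and then two consecutive powers of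
`c` are identified (`Matching.hom_ne`).
-/


/-- Generators of the monoid `SKω`: cups `δ_k`, caps `γ_k` and crossings `σ_k`,
indexed by positive natural numbers. -/
inductive SKGen : Type
  | cup : ℕ+ → SKGen
  | cap : ℕ+ → SKGen
  | cross : ℕ+ → SKGen

open FreeMonoid in
/-- The defining relations of the monoid `SKω`. -/
inductive SKRel : FreeMonoid SKGen → FreeMonoid SKGen → Prop
  | cup (j k : ℕ+) (h : j ≤ k) :
      SKRel (of (.cup k) * of (.cup j)) (of (.cup j) * of (.cup (k + 2)))
  | cap (j k : ℕ+) (h : j ≤ k) :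
      SKRel (of (.cap j) * of (.cap k)) (of (.cap (k + 2)) * of (.cap j))
  | cup_cap_one (j k : ℕ+) (h : j ≤ k) :
      SKRel (of (.cup (k + 2)) * of (.cap j)) (of (.cap j) * of (.cup k))
  | cap_cup_one (j k : ℕ+) (h : j ≤ k) :
      SKRel (of (.cup j) * of (.cap (k + 2))) (of (.cap k) * of (.cup j))
  | cup_cap (i : ℕ+) :
      SKRel (of (.cup i) * of (.cap (i + 1))) 1
  | sigma (j k : ℕ+) (h : j ≤ k) :
      SKRel (of (.cross (k + 2)) * of (.cross j)) (of (.cross j) * of (.cross (k + 2)))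
  | sigma_two (i : ℕ+) :
      SKRel (of (.cross i) * of (.cross i)) 1
  | sigma_three (i : ℕ+) :
      SKRel (of (.cross (i + 1)) * of (.cross i) * of (.cross (i + 1)))
            (of (.cross i) * of (.cross (i + 1)) * of (.cross i))
  | sigma_cup_one (j k : ℕ+) (h : j ≤ k) :
      SKRel (of (.cup (k + 2)) * of (.cross j)) (of (.cross j) * of (.cup (k + 2)))
  | sigma_cup_two (j k : ℕ+) (h : j ≤ k) :
      SKRel (of (.cup j) * of (.cross (k + 2))) (of (.cross k) * of (.cup j))
  | sigma_cup_three (i : ℕ+) :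
      SKRel (of (.cup i) * of (.cross i)) (of (.cup i))
  | sigma_cup_four (i : ℕ+) :
      SKRel (of (.cup (i + 1)) * of (.cross i)) (of (.cup i) * of (.cross (i + 1)))
  | sigma_cap_one (j k : ℕ+) (h : j ≤ k) :
      SKRel (of (.cross j) * of (.cap (k + 2))) (of (.cap (k + 2)) * of (.cross j))
  | sigma_cap_two (j k : ℕ+) (h : j ≤ k) :
      SKRel (of (.cross (k + 2)) * of (.cap j)) (of (.cap j) * of (.cross k))
  | sigma_cap_three (i : ℕ+) :
      SKRel (of (.cross i) * of (.cap i)) (of (.cap i))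
  | sigma_cap_four (i : ℕ+) :
      SKRel (of (.cross i) * of (.cap (i + 1))) (of (.cross (i + 1)) * of (.cap i))

/-- The monoid `SKω`, presented by cups, caps and crossings with the monoid, cup-cap,
σ, σ-cup and σ-cap equations. -/
def SKomega : Type := PresentedMonoid SKRel

instance : Monoid SKomega := by unfold SKomega; infer_instance

/-- The cup generator `δ_k` of `SKω`. -/
def SKomega.cup (k : ℕ+) : SKomega := PresentedMonoid.of SKRel (SKGen.cup k)

/-- The cap generator `γ_k` of `SKω`. -/
def SKomega.cap (k : ℕ+) : SKomega := PresentedMonoid.of SKRel (SKGen.cap k)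

/-- The crossing generator `σ_k` of `SKω`. -/
def SKomega.cross (k : ℕ+) : SKomega := PresentedMonoid.of SKRel (SKGen.cross k)


/-- The circle element `c = δ_1 γ_1` of `SKω`. -/
def SKomega.circle : SKomega := SKomega.cup 1 * SKomega.cap 1

namespace SKomega

/-! ### The relations, indexed from zero -/

/-- The cup `δ_{i+1}`; all indices below are shifted to start at `0`. -/
def d (i : ℕ) : SKomega := cup i.succPNat

/-- The cap `γ_{i+1}`. -/
def g (i : ℕ) : SKomega := cap i.succPNat

/-- The crossing `σ_{i+1}`. -/
def s (i : ℕ) : SKomega := cross i.succPNat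

theorem mk_eq {a b : FreeMonoid SKGen} (r : SKRel a b) :
    PresentedMonoid.mk SKRel a = PresentedMonoid.mk SKRel b :=
  Quotient.sound (ConGen.Rel.of _ _ r)

theorem succPNat_add_two (k : ℕ) : (k + 2).succPNat = k.succPNat + 2 := by
  apply PNat.eq; simp [Nat.succPNat_coe]

theorem succPNat_add_one (k : ℕ) : (k + 1).succPNat = k.succPNat + 1 := by
  apply PNat.eq; simp [Nat.succPNat_coe]

theorem succPNat_le {j k : ℕ} (h : j ≤ k) : j.succPNat ≤ k.succPNat :=
  Nat.succPNat_le_succPNat.2 h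

theorem d_d {j k : ℕ} (h : j ≤ k) : d k * d j = d j * d (k + 2) := by
  unfold d; rw [succPNat_add_two]; exact mk_eq (.cup _ _ (succPNat_le h))

theorem g_g {j k : ℕ} (h : j ≤ k) : g j * g k = g (k + 2) * g j := by
  unfold g; rw [succPNat_add_two]; exact mk_eq (.cap _ _ (succPNat_le h))

theorem d_g_high {j k : ℕ} (h : j ≤ k) : d (k + 2) * g j = g j * d k := by
  unfold d g; rw [succPNat_add_two]; exact mk_eq (.cup_cap_one _ _ (succPNat_le h))

theorem d_g_low {j k : ℕ} (h : j ≤ k) : d j * g (k + 2) = g k * d j := by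
  unfold d g; rw [succPNat_add_two]; exact mk_eq (.cap_cup_one _ _ (succPNat_le h))

theorem d_g_succ (i : ℕ) : d i * g (i + 1) = 1 := by
  unfold d g; rw [succPNat_add_one]; exact mk_eq (.cup_cap _)

theorem s_s_far {j k : ℕ} (h : j ≤ k) : s (k + 2) * s j = s j * s (k + 2) := by
  unfold s; rw [succPNat_add_two]; exact mk_eq (.sigma _ _ (succPNat_le h))

theorem s_s (i : ℕ) : s i * s i = 1 := mk_eq (.sigma_two _)

theorem s_braid (i : ℕ) : s (i + 1) * s i * s (i + 1) = s i * s (i + 1) * s i := by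
  unfold s; rw [succPNat_add_one]; exact mk_eq (.sigma_three _)

theorem d_s_high {j k : ℕ} (h : j ≤ k) : d (k + 2) * s j = s j * d (k + 2) := by
  unfold d s; rw [succPNat_add_two]; exact mk_eq (.sigma_cup_one _ _ (succPNat_le h))

theorem d_s_low {j k : ℕ} (h : j ≤ k) : d j * s (k + 2) = s k * d j := by
  unfold d s; rw [succPNat_add_two]; exact mk_eq (.sigma_cup_two _ _ (succPNat_le h))

theorem d_s (i : ℕ) : d i * s i = d i := mk_eq (.sigma_cup_three _)

theorem d_s_succ (i : ℕ) : d (i + 1) * s i = d i * s (i + 1) := by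
  unfold d s; rw [succPNat_add_one]; exact mk_eq (.sigma_cup_four _)

theorem s_g_low {j k : ℕ} (h : j ≤ k) : s j * g (k + 2) = g (k + 2) * s j := by
  unfold g s; rw [succPNat_add_two]; exact mk_eq (.sigma_cap_one _ _ (succPNat_le h))

theorem s_g_high {j k : ℕ} (h : j ≤ k) : s (k + 2) * g j = g j * s k := by
  unfold g s; rw [succPNat_add_two]; exact mk_eq (.sigma_cap_two _ _ (succPNat_le h))

theorem s_g (i : ℕ) : s i * g i = g i := mk_eq (.sigma_cap_three _)

theorem s_g_succ (i : ℕ) : s i * g (i + 1) = s (i + 1) * g i := by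
  unfold g s; rw [succPNat_add_one]; exact mk_eq (.sigma_cap_four _)

theorem s_s_mul (i : ℕ) (x : SKomega) : s i * (s i * x) = x := by
  rw [← mul_assoc, s_s, one_mul]

theorem d_succ (i : ℕ) : d (i + 1) = d i * s (i + 1) * s i := by
  rw [← d_s_succ, mul_assoc, s_s, mul_one]

theorem g_succ (i : ℕ) : g (i + 1) = s i * s (i + 1) * g i := by
  rw [mul_assoc, ← s_g_succ, s_s_mul]

theorem d_succ_g (i : ℕ) : d (i + 1) * g i = 1 := by
  rw [d_succ, mul_assoc, s_g, mul_assoc, ← s_g_succ, ← mul_assoc, d_s, d_g_succ]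

theorem d_s_succ_g (i : ℕ) : d i * (s (i + 1) * g i) = 1 := by
  rw [← s_g_succ, ← mul_assoc, d_s, d_g_succ]

/-- A loop may be placed anywhere: `δ_i γ_i` does not depend on `i`. -/
theorem d_g (i : ℕ) : d i * g i = circle := by
  induction i with
  | zero => rfl
  | succ i ih =>
    rw [d_succ, g_succ, ← ih]
    simp only [mul_assoc, s_s_mul]

theorem d_mul_circle (k : ℕ) : d k * circle = circle * d k := by
  rw [← d_g (k + 2), ← mul_assoc, ← d_d le_rfl, mul_assoc, d_g_low le_rfl, ← mul_assoc, d_g, d_g]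

theorem g_mul_circle (k : ℕ) : g k * circle = circle * g k := by
  conv_rhs => rw [← d_g (k + 2), mul_assoc, ← g_g le_rfl, ← mul_assoc, d_g_high le_rfl, mul_assoc,
    d_g]

theorem s_mul_circle (k : ℕ) : s k * circle = circle * s k := by
  rw [← d_g (k + 2), ← mul_assoc, ← d_s_high le_rfl, mul_assoc, s_g_low le_rfl, mul_assoc]

/-- An induction principle: `SKω` is generated by the cups, caps and crossings. -/
theorem induction_gen {P : SKomega → Prop} (one : P 1) (hd : ∀ i x, P x → P (d i * x))
    (hg : ∀ i x, P x → P (g i * x)) (hs : ∀ i x, P x → P (s i * x)) (x : SKomega) : P x := by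
  obtain ⟨w, rfl⟩ : ∃ w, PresentedMonoid.mk SKRel w = x := Quotient.exists_rep x
  induction w using FreeMonoid.inductionOn' with
  | one => exact one
  | of_mul a w ih =>
    have e : ∀ k : ℕ+, k.natPred.succPNat = k := PNat.succPNat_natPred
    cases a with
    | cup k => have := hd k.natPred _ ih; unfold d at this; rw [e] at this; exact this
    | cap k => have := hg k.natPred _ ih; unfold g at this; rw [e] at this; exact this
    | cross k => have := hs k.natPred _ ih; unfold s at this; rw [e] at this; exact this

/-- The circle element is central. -/
theorem circle_central (x : SKomega) : Commute circle x := by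
  induction x using induction_gen with
  | one => exact Commute.one_right _
  | hd i x ih => exact Commute.mul_right (d_mul_circle i).symm ih
  | hg i x ih => exact Commute.mul_right (g_mul_circle i).symm ih
  | hs i x ih => exact Commute.mul_right (s_mul_circle i).symm ih

theorem mul_circle_pow (x : SKomega) (k : ℕ) (y : SKomega) :
    x * (circle ^ k * y) = circle ^ k * (x * y) := by
  rw [← mul_assoc, ← ((circle_central x).pow_left k).eq, mul_assoc]

theorem mul_eq_mul_assoc {a b c : SKomega} (h : a * b = c) (x : SKomega) :
    a * (b * x) = c * x := by
  rw [← mul_assoc, h]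

/-! ### Long caps -/

/-- The cap joining the points `0` and `j + 1`, the remaining points going straight through. -/
def longCap : ℕ → SKomega
  | 0 => g 0
  | j + 1 => s (j + 1) * longCap j

/-- The mirror image of `longCap j`: the cup joining the points `0` and `j + 1`. -/
def longCup : ℕ → SKomega
  | 0 => d 0
  | j + 1 => longCup j * s (j + 1)

theorem s_longCap_self (j : ℕ) : s (j + 1) * longCap (j + 1) = longCap j := s_s_mul _ _

theorem s_longCap_high {j k : ℕ} (h : j ≤ k) : s (k + 2) * longCap j = longCap j * s k := by
  induction j with
  | zero => exact s_g_high h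
  | succ j ih =>
    rw [longCap, ← mul_assoc, s_s_far h, mul_assoc, ih (by omega), mul_assoc]

theorem s_longCap_low {i j : ℕ} (h : i + 1 < j) : s (i + 1) * longCap j = longCap j * s i := by
  induction j with
  | zero => omega
  | succ j ih =>
    obtain h | rfl := Nat.lt_or_eq_of_le (Nat.lt_succ_iff.1 h)
    · obtain ⟨k, rfl⟩ : ∃ k, j = k + 1 := ⟨j - 1, by omega⟩
      rw [longCap, ← mul_assoc, ← s_s_far (by omega), mul_assoc, ih h, mul_assoc]
    · rw [longCap, longCap, ← mul_assoc, ← mul_assoc, ← s_braid, mul_assoc,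
        s_longCap_high le_rfl, mul_assoc, mul_assoc, mul_assoc]

theorem longCup_longCap (j : ℕ) : longCup j * longCap j = circle := by
  induction j with
  | zero => rfl
  | succ j ih => rw [longCup, mul_assoc, s_longCap_self, ih]

/-- The exchange of the first two points in the matching `{0,2}, {1,3}`, written out: the result
is the matching `{0,3}, {1,2}`. -/
theorem s_zero_longCap_one : s 0 * (longCap 1 * longCap 0) = longCap 2 * longCap 0 := by
  have e : g 0 * g 0 = g 2 * g 0 := g_g le_rfl
  have e1 : s 1 * g 2 = s 2 * g 1 := s_g_succ 1
  have e2 : g 1 = s 0 * s 1 * g 0 := g_succ 0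
  simp only [longCap, zero_add, Nat.reduceAdd]
  calc s 0 * (s 1 * g 0 * g 0) = g 1 * g 0 := by rw [e2]; simp only [mul_assoc]
    _ = s 2 * (s 2 * (g 1 * g 0)) := (s_s_mul _ _).symm
    _ = s 2 * (s 1 * g 2 * g 0) := by rw [e1, mul_assoc]
    _ = s 2 * (s 1 * g 0) * g 0 := by
      simp only [mul_assoc]; rw [e]

/-! ### Matchings -/

/-- `Matching p x` says that `x` is a diagram consisting of `p` caps and no circles on the first
`2 * p` points: a cap from the point `0` to a point `j + 1`, on top of such a diagram on the
remaining points. -/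
inductive Matching : ℕ → SKomega → Prop
  | one : Matching 0 1
  | cap {p : ℕ} (j : ℕ) (hj : j ≤ 2 * p) {w : SKomega} (hw : Matching p w) :
      Matching (p + 1) (longCap j * w)

namespace Matching

/-- Permuting the points of a matching yields a matching. The delicate case is the crossing of
the points `0` and `1` when they are not joined; crossings of the other points move the other
ends of the two caps involved into the position of `s_zero_longCap_one`. -/
theorem s_mul {p : ℕ} {x : SKomega} (hx : Matching p x) {i : ℕ} (hi : i + 2 ≤ 2 * p) :
    Matching p (s i * x) := by
  induction p generalizing x i with
  | zero => omega
  | succ p ih =>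
    have key : ∀ {i : ℕ} {x : SKomega}, Matching (p + 1) x → i + 3 ≤ 2 * (p + 1) →
        Matching (p + 1) (s (i + 1) * x) := by
      rintro i _ (_ | ⟨j, hj, hw⟩) hi
      rename_i w
      rw [← mul_assoc]
      rcases lt_trichotomy (i + 1) j with h | rfl | h
      · rw [s_longCap_low h, mul_assoc]
        exact cap j hj (ih hw (by omega))
      · rw [s_longCap_self]
        exact cap i (by omega) hw
      · obtain rfl | h := Nat.eq_or_lt_of_le (Nat.lt_succ_iff.1 h)
        · exact cap (j + 1) (by omega) hw
        · obtain ⟨k, rfl⟩ : ∃ k, i = k + 1 := ⟨i - 1, by omega⟩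
          rw [s_longCap_high (by omega), mul_assoc]
          exact cap j hj (ih hw (by omega))
    obtain _ | i := i
    swap
    · exact key hx hi
    obtain _ | ⟨j, hj, hw⟩ := hx
    rename_i w
    obtain _ | j := j
    · rw [← mul_assoc, longCap, s_g]
      exact cap 0 (by omega) hw
    obtain _ | ⟨l, hl, hw⟩ := hw
    · omega
    rename_i p w
    induction j with
    | zero =>
      induction l with
      | zero =>
        rw [← mul_assoc (longCap _), ← mul_assoc, s_zero_longCap_one, mul_assoc]
        exact cap 2 (by omega) (cap 0 (by omega) hw)
      | succ l ihl =>
        have e : s 0 * (longCap (0 + 1) * (longCap (l + 1) * w)) =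
            s (l + 2 + 1) * (s 0 * (longCap (0 + 1) * (longCap l * w))) := by
          rw [longCap.eq_2 l, mul_assoc (s _), ← mul_assoc (longCap _) (s _),
            ← s_longCap_high (by omega), mul_assoc, ← mul_assoc, ← s_s_far (by omega), mul_assoc]
        rw [e]
        exact key (ihl (by omega)) (by omega)
    | succ j ihj =>
      rw [longCap, mul_assoc, ← mul_assoc, ← s_s_far (by omega), mul_assoc]
      exact key (ihj (by omega)) (by omega)

theorem g_mul {p : ℕ} {x : SKomega} (hx : Matching p x) {j : ℕ} (hj : j ≤ 2 * p) :
    Matching (p + 1) (g j * x) := by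
  induction j with
  | zero => exact cap 0 hj hx
  | succ j ih =>
    rw [g_succ, mul_assoc, mul_assoc]
    exact s_mul (s_mul (ih (by omega)) (by omega)) (by omega)

theorem d_zero_mul {p j : ℕ} (hj : j + 1 ≤ 2 * p) {w : SKomega} (hw : Matching p w) :
    Matching p (d 0 * (longCap (j + 1) * w)) := by
  induction j with
  | zero =>
    have e : d 0 * longCap (0 + 1) = 1 := d_s_succ_g 0
    rwa [mul_eq_mul_assoc e, one_mul]
  | succ j ih =>
    rw [longCap, mul_assoc, ← mul_assoc, d_s_low (Nat.zero_le _), mul_assoc]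
    exact s_mul (ih (by omega)) (by omega)

theorem exists_d_mul {p : ℕ} {x : SKomega} (hx : Matching (p + 1) x) {j : ℕ} (hj : j ≤ 2 * p) :
    ∃ e u, Matching p u ∧ d j * x = circle ^ e * u := by
  induction j generalizing x with
  | zero =>
    obtain _ | ⟨l, hl, hw⟩ := hx
    rename_i w
    obtain _ | l := l
    · exact ⟨1, w, hw, by rw [← mul_assoc, pow_one]; rfl⟩
    · exact ⟨0, _, d_zero_mul hl hw, by rw [pow_zero, one_mul]⟩
  | succ j ih =>
    rw [d_succ, mul_assoc, mul_assoc]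
    exact ih (s_mul (s_mul hx (by omega)) (by omega)) (by omega)

/-- Closing `0` and `j + 1`, which are not joined, joins their partners without creating a
circle. -/
theorem longCup_mul_of_ne {p i j : ℕ} (hi : i ≤ 2 * p) (hj : j ≤ 2 * p) (hij : j ≠ i)
    {w : SKomega} (hw : Matching p w) : Matching p (longCup j * (longCap i * w)) := by
  induction j generalizing i w with
  | zero =>
    obtain ⟨i, rfl⟩ : ∃ k, i = k + 1 := ⟨i - 1, by omega⟩
    exact d_zero_mul hi hw
  | succ j ih =>
    rw [longCup, mul_assoc]
    rcases lt_trichotomy i j with h | rfl | h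
    · obtain ⟨k, rfl⟩ : ∃ k, j = k + 1 := ⟨j - 1, by omega⟩
      rw [mul_eq_mul_assoc (s_longCap_high (by omega)), mul_assoc]
      exact ih hi (by omega) (by omega) (s_mul hw (by omega))
    · rw [← mul_assoc (s _)]
      exact ih (i := i + 1) hj (by omega) (by omega) hw
    · rw [mul_eq_mul_assoc (s_longCap_low (by omega)), mul_assoc]
      exact ih hi (by omega) (by omega) (s_mul hw (by omega))

theorem exists_longCup_mul {p : ℕ} {x : SKomega} (hx : Matching (p + 1) x) {j : ℕ}
    (hj : j ≤ 2 * p) : ∃ e u, Matching p u ∧ longCup j * x = circle ^ e * u := by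
  obtain _ | ⟨i, hi, hw⟩ := hx
  rename_i w
  by_cases h : j = i
  · subst h
    exact ⟨1, w, hw, by rw [← mul_assoc, longCup_longCap, pow_one]⟩
  · exact ⟨0, _, longCup_mul_of_ne hi hj h hw, by rw [pow_zero, one_mul]⟩

end Matching

/-! ### Types and bending -/

/-- `HasType n m x` says that, from the `n`-th point at the top and the `m`-th point at the bottom
on, the diagram `x` consists of parallel strands, in the sense that cups and caps
pass through `x` there. -/
def HasType (n m : ℕ) (x : SKomega) : Prop :=
  ∀ i, x * d (m + i) = d (n + i) * x ∧ x * g (m + i) = g (n + i) * x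

namespace HasType

theorem one : HasType 0 0 1 := fun i => by simp

theorem raise {n m : ℕ} {x : SKomega} (hx : HasType n m x) (t : ℕ) :
    HasType (n + t) (m + t) x := fun i => by
  simpa only [add_assoc] using hx (t + i)

theorem mul {n m l : ℕ} {x y : SKomega} (hx : HasType n m x) (hy : HasType m l y) :
    HasType n l (x * y) := fun i => by
  constructor
  · rw [mul_assoc, (hy i).1, ← mul_assoc, (hx i).1, mul_assoc]
  · rw [mul_assoc, (hy i).2, ← mul_assoc, (hx i).2, mul_assoc]

theorem d (k : ℕ) : HasType k (k + 2) (d k) := fun i => by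
  rw [show k + 2 + i = k + i + 2 by omega]
  exact ⟨(d_d (by omega)).symm, d_g_low (by omega)⟩

theorem g (k : ℕ) : HasType (k + 2) k (g k) := fun i => by
  rw [show k + 2 + i = k + i + 2 by omega]
  exact ⟨(d_g_high (by omega)).symm, g_g (by omega)⟩

theorem s (k : ℕ) : HasType (k + 2) (k + 2) (s k) := fun i => by
  rw [show k + 2 + i = k + i + 2 by omega]
  exact ⟨(d_s_high (by omega)).symm, s_g_low (by omega)⟩

theorem longCap (j : ℕ) : HasType (j + 2) j (longCap j) := by
  induction j with
  | zero => exact g 0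
  | succ j ih => exact (s (j + 1)).mul (ih.raise 1)

theorem mul_g {n m : ℕ} {x : SKomega} (hx : HasType n (m + 1) x) :
    HasType (n + 1) m (x * SKomega.g m) :=
  (hx.raise 1).mul (g m)

end HasType

theorem Matching.hasType {p : ℕ} {x : SKomega} (hx : Matching p x) : HasType (2 * p) 0 x := by
  induction hx with
  | one => exact HasType.one
  | @cap p j hj w hw ih =>
    have := (HasType.longCap j).raise (2 * p - j)
    rw [show j + 2 + (2 * p - j) = 2 * (p + 1) by omega, show j + (2 * p - j) = 2 * p by omega]
      at this
    exact this.mul ih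

/-- The product `γ_m ⋯ γ_1`. Multiplying a diagram with `m` bottom points by it on the right bends
all of these points up to the right of the top points. -/
def bend : ℕ → SKomega
  | 0 => 1
  | m + 1 => g m * bend m

/-- Bending loses no information: a cup at the top straightens each bent strand again. -/
theorem HasType.bend_cancel {n m : ℕ} {x y : SKomega} (hx : HasType n m x) (hy : HasType n m y)
    (h : x * bend m = y * bend m) : x = y := by
  induction m generalizing n x y with
  | zero => simpa [bend] using h
  | succ m ih =>
    simp only [bend, ← mul_assoc] at h
    have e := ih hx.mul_g hy.mul_g h
    have key : ∀ z, HasType n (m + 1) z → SKomega.d n * (z * SKomega.g m) = z := fun z hz => by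
      have := (hz 0).1
      rw [add_zero, add_zero] at this
      rw [← mul_assoc, ← this, mul_assoc, d_succ_g, mul_one]
    rw [← key x hx, e, key y hy]

/-- `BendsAt n m x`: the diagram `x` has `n` points at the top and `m` points at the bottom, and
bending it gives a matching together with some circles. -/
def BendsAt (n m : ℕ) (x : SKomega) : Prop :=
  HasType n m x ∧ ∃ p k u, n + m = 2 * p ∧ Matching p u ∧ x * bend m = circle ^ k * u

theorem BendsAt.raise {n m : ℕ} {x : SKomega} (hx : BendsAt n m x) (t : ℕ) :
    BendsAt (n + t) (m + t) x := by
  induction t with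
  | zero => exact hx
  | succ t ih =>
    obtain ⟨ht, p, k, u, hp, hu, e⟩ := ih
    refine ⟨ht.raise 1, p + 1, k, _, by omega, hu.g_mul (j := n + t) (by omega), ?_⟩
    have := (ht 0).2
    rw [add_zero, add_zero] at this
    rw [← add_assoc, bend, mul_eq_mul_assoc this, mul_assoc, e, mul_circle_pow]

theorem exists_bendsAt (x : SKomega) : ∃ n m, BendsAt n m x := by
  induction x using induction_gen with
  | one => exact ⟨0, 0, HasType.one, 0, 0, 1, rfl, .one, by simp [bend]⟩
  | hd i x ih =>
    obtain ⟨n, m, hx⟩ := ih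
    obtain ⟨ht, p, k, u, hp, hu, e⟩ := hx.raise (i + 2)
    obtain ⟨p, rfl⟩ : ∃ q, p = q + 1 := ⟨p - 1, by omega⟩
    obtain ⟨f, v, hv, e'⟩ := hu.exists_d_mul (j := i) (by omega)
    have hd := (HasType.d i).raise n
    rw [show i + 2 + n = n + (i + 2) by omega] at hd
    refine ⟨_, _, hd.mul ht, p, k + f, v, by omega, hv, ?_⟩
    rw [mul_assoc, e, mul_circle_pow, e', pow_add, mul_assoc]
  | hg i x ih =>
    obtain ⟨n, m, hx⟩ := ih
    obtain ⟨ht, p, k, u, hp, hu, e⟩ := hx.raise i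
    have hg := (HasType.g i).raise n
    rw [add_comm i n] at hg
    refine ⟨_, _, hg.mul ht, p + 1, k, _, by omega, hu.g_mul (j := i) (by omega), ?_⟩
    rw [mul_assoc, e, mul_circle_pow]
  | hs i x ih =>
    obtain ⟨n, m, hx⟩ := ih
    obtain ⟨ht, p, k, u, hp, hu, e⟩ := hx.raise (i + 2)
    have hs := (HasType.s i).raise n
    rw [show i + 2 + n = n + (i + 2) by omega] at hs
    refine ⟨_, _, hs.mul ht, p, k, _, by omega, hu.s_mul (i := i) (by omega), ?_⟩
    rw [mul_assoc, e, mul_circle_pow]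

/-! ### Homomorphisms that separate the powers of the circle -/

section Hom

variable {M : Type*} [Monoid M] {h : SKomega →* M}

theorem hom_congr {x y : SKomega} (e : h x = h y) (a b : SKomega) :
    h (a * x * b) = h (a * y * b) := by
  simp only [map_mul, e]

theorem hom_longCup {k l : ℕ} {x y : SKomega} (e : h (circle ^ k * x) = h (circle ^ l * y))
    (j : ℕ) : h (circle ^ k * (longCup j * x)) = h (circle ^ l * (longCup j * y)) := by
  rw [← mul_circle_pow, ← mul_circle_pow, map_mul, e, ← map_mul]

/-- Two matchings of the same size are separated: closing `0` and `j + 1` creates a circle exactly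
when they are joined. If the first caps differ, doing this for each of them in turn would give
both `k + 1 = l` and `l + 1 = k`. -/
theorem Matching.eq_of_hom_eq (hc : ∀ k l : ℕ, h (circle ^ k) = h (circle ^ l) → k = l)
    {p : ℕ} {u v : SKomega} (hu : Matching p u) (hv : Matching p v) {k l : ℕ}
    (e : h (circle ^ k * u) = h (circle ^ l * v)) : k = l ∧ u = v := by
  induction p generalizing u v k l with
  | zero =>
    cases hu
    cases hv
    exact ⟨hc k l (by simpa using e), rfl⟩
  | succ p ih =>
    obtain _ | ⟨i, hi, hu⟩ := hu
    obtain _ | ⟨j, hj, hv⟩ := hv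
    rename_i u v
    have close : ∀ (i k : ℕ) (w : SKomega),
        circle ^ k * (longCup i * (longCap i * w)) = circle ^ (k + 1) * w := fun i k w => by
      rw [← mul_assoc (longCup i), longCup_longCap, pow_succ, mul_assoc]
    have e1 := hom_longCup e i
    have e2 := hom_longCup e j
    rw [close] at e1 e2
    by_cases hij : i = j
    · subst hij
      rw [close] at e1
      obtain ⟨hk, rfl⟩ := ih hu hv e1
      exact ⟨by omega, rfl⟩
    · have h1 := (ih hu (Matching.longCup_mul_of_ne hj hi hij hv) e1).1
      have h2 := (ih (Matching.longCup_mul_of_ne hi hj (Ne.symm hij) hu) hv e2).1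
      omega

/-- A nonempty matching is never identified with a circle power. Otherwise it would commute with
everything up to a circle power, so that a cup could be moved away from a crossing; the
crossing `σ_j` would then act trivially, and `δ_{j+1} σ_j γ_{j+1} = 1` would be identified with the
circle `δ_{j+1} γ_{j+1}`. -/
theorem Matching.hom_ne (hc : ∀ k l : ℕ, h (circle ^ k) = h (circle ^ l) → k = l)
    {q : ℕ} {v : SKomega} (hv : Matching (q + 1) v) (k l : ℕ) :
    h (circle ^ k) ≠ h (circle ^ l * v) := by
  intro e
  have slide : ∀ i, h (circle ^ k * d i) = h (circle ^ k * d (2 * q + i + 2)) := fun i => by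
    have t := (hv.hasType i).1
    rw [zero_add, show 2 * (q + 1) + i = 2 * q + i + 2 by omega] at t
    rw [map_mul, e, ← map_mul, mul_assoc, t, ← mul_circle_pow, map_mul, ← e, ← map_mul,
      ((circle_central _).pow_left k).eq]
  -- The cup far to the right absorbs the crossing; the cup at `0` lets it pass.
  have triv : h (circle ^ k * s (2 * q)) = h (circle ^ k) := by
    have e1 := hom_congr (slide 0) 1 (s (2 * q + 2) * g 1)
    simp only [one_mul, add_zero] at e1
    have l1 : circle ^ k * d 0 * (s (2 * q + 2) * g 1) = circle ^ k * s (2 * q) := by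
      rw [mul_assoc, ← mul_assoc (d 0), d_s_low (Nat.zero_le _), mul_assoc (s _), d_g_succ 0,
        mul_one]
    have l2 : circle ^ k * d (2 * q + 2) * (s (2 * q + 2) * g 1) =
        circle ^ k * d (2 * q + 2) * g 1 := by
      rw [mul_assoc, ← mul_assoc (d _), d_s, mul_assoc]
    have e2 := hom_congr (slide 0) 1 (g 1)
    simp only [one_mul, add_zero] at e2
    rw [l1, l2, ← e2, mul_assoc, d_g_succ 0, mul_one] at e1
    exact e1
  have e3 := hom_congr triv (d (2 * q + 1)) (g (2 * q + 1))
  have l3 : d (2 * q + 1) * (circle ^ k * s (2 * q)) * g (2 * q + 1) = circle ^ k := by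
    rw [mul_circle_pow, mul_assoc, d_s_succ, mul_assoc, s_g, d_g_succ, mul_one]
  have l4 : d (2 * q + 1) * circle ^ k * g (2 * q + 1) = circle ^ (k + 1) := by
    rw [mul_assoc, mul_circle_pow, d_g, pow_succ]
  rw [l3, l4] at e3
  have := hc _ _ e3
  omega

/-- Matchings of different sizes are separated, since closing all points of the smaller one leaves
a nonempty matching of the larger one. -/
theorem Matching.hom_ne_of_lt (hc : ∀ k l : ℕ, h (circle ^ k) = h (circle ^ l) → k = l)
    {p q : ℕ} (hpq : p < q) {u v : SKomega} (hu : Matching p u) (hv : Matching q v) (k l : ℕ) :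
    h (circle ^ k * u) ≠ h (circle ^ l * v) := by
  induction hu generalizing q v k l with
  | one =>
    obtain ⟨q, rfl⟩ : ∃ r, q = r + 1 := ⟨q - 1, by omega⟩
    rw [mul_one]
    exact hv.hom_ne hc k l
  | @cap p j hj w hw ih =>
    intro e
    obtain ⟨q, rfl⟩ : ∃ r, q = r + 1 := ⟨q - 1, by omega⟩
    obtain ⟨f, v', hv', e'⟩ := hv.exists_longCup_mul (j := j) (by omega)
    have e1 := hom_longCup e j
    rw [e', ← mul_assoc (longCup j), longCup_longCap, ← mul_assoc, ← mul_assoc, ← pow_succ,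
      ← pow_add] at e1
    exact ih (by omega) hv' _ _ e1

theorem eq_of_bendsAt (hc : ∀ k l : ℕ, h (circle ^ k) = h (circle ^ l) → k = l)
    {n n' m : ℕ} {x y : SKomega} (hx : BendsAt n m x) (hy : BendsAt n' m y) (e : h x = h y) :
    x = y := by
  obtain ⟨tx, p, k, u, hp, hu, ex⟩ := hx
  obtain ⟨ty, q, l, v, hq, hv, ey⟩ := hy
  have e' : h (circle ^ k * u) = h (circle ^ l * v) := by
    rw [← ex, ← ey, map_mul, e, map_mul]
  rcases lt_trichotomy p q with hlt | rfl | hlt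
  · exact absurd e' (hu.hom_ne_of_lt hc hlt hv k l)
  · obtain ⟨rfl, rfl⟩ := hu.eq_of_hom_eq hc hv e'
    obtain rfl : n = n' := by omega
    exact tx.bend_cancel ty (ex.trans ey.symm)
  · exact absurd e'.symm (hv.hom_ne_of_lt hc hlt hu l k)

end Hom

end SKomega

/-- If a monoid homomorphism `h` from `SKω` to a monoid `M` separates all the powers of the
circle element `c`, then `h` is injective (so `SKω` is isomorphic to the submonoid `h(SKω)`
of `M`). -/
theorem skomega_hom_injective_of_circle_powers {M : Type*} [Monoid M]
    (h : SKomega →* M)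
    (hc : ∀ k l : ℕ, k ≠ l → h (SKomega.circle ^ k) ≠ h (SKomega.circle ^ l)) :
    Function.Injective h := by
  have hc' : ∀ k l : ℕ, h (SKomega.circle ^ k) = h (SKomega.circle ^ l) → k = l :=
    fun k l e => by_contra fun hkl => hc k l hkl e
  intro x y hxy
  obtain ⟨n, m, hx⟩ := SKomega.exists_bendsAt x
  obtain ⟨n', m', hy⟩ := SKomega.exists_bendsAt y
  exact SKomega.eq_of_bendsAt hc' (hx.raise m') (by simpa [add_comm] using hy.raise m) hxy
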